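/- Let φ and ψ be analytic functions on the unit disk belonging to the Hardy space H^p for some p > 1. Then for every real t, ∫_{-1}^{1} (|φ(x e^{it})| + |ψ(x e^{it})|)^p dx ≤ (1/2) ∫₀^{2π} (|φ(e^{iθ})| + |ψ(e^{iθ})|)^p dθ, where φ(e^{iθ}), ψ(e^{iθ}) denote radial boundary values. -/

import Mathlib

open Complex MeasureTheory Real Filter

/-!
The sum `‖φ‖ + ‖ψ‖` is the norm of the single holomorphic function `(φ, ψ)` with values in an
`ℓ¹`-product, so it is enough to prove the Fejér–Riesz inequality for a vector-valued `f ∈ H^p`.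

Suppose first that `f` is continuous on the closed disc. Weierstrass approximation on the circle
gives an entire `q` with `‖f‖^p ≤ exp (Re q) ≤ ‖f‖^p + ε` there, and the maximum principle
for `exp (-q / p) • f` extends the first inequality to the disc. Since `exp (Re q) = |G|²` with
`G = exp (q / 2)`, the claim is reduced to `∫ |G|²` over the diameter, which is the integral of
the entire function `z ↦ G z * conj (G (conj z))` and hence, by Cauchy's theorem, an integral over
a semicircle; the inequality `2ab ≤ a² + b²` on the semicircle then yields the full circle.

For general `f` this applies to the dilations `z ↦ f (r z)`. As `r → 1`, boundedness of the means
of order `p` makes the powers `s < p` uniformly integrable, so the circle integrals converge for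
such `s`; letting `s` increase to `p` then gives the inequality at the exponent `p` itself.
-/

open scoped ENNReal Topology

section Semicircle

theorem integral_diameter_eq_neg_integral_semicircle {E : Type*} [NormedAddCommGroup E]
    [NormedSpace ℂ E] [CompleteSpace E] {H : ℂ → E} (hH : Differentiable ℂ H) (R : ℝ) :
    ∫ x in -R..R, H x = -∫ θ in 0..π, (circleMap 0 R θ * I) • H (circleMap 0 R θ) := by
  obtain ⟨K, hK⟩ := (hH.differentiableOn (s := Metric.ball 0 (|R| + 1))).isExactOn_ball
  have hdiameter : ∫ x in -R..R, H x = K R - K (-R) := by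
    have hmem : ∀ x ∈ Set.uIcc (-R) R, (x : ℂ) ∈ Metric.ball 0 (|R| + 1) := by
      intro x hx
      have hxR : |x| ≤ |R| := by
        rcases Set.mem_uIcc.1 hx with h | h <;> grind
      simpa only [mem_ball_zero_iff, norm_real, Real.norm_eq_abs] using hxR.trans_lt (lt_add_one _)
    have hderiv : ∀ x ∈ Set.uIcc (-R) R, HasDerivAt (fun x : ℝ ↦ K x) (H x) x := fun x hx ↦ by
      simpa only [Function.comp_def, id, ofReal_one, one_smul] using
        (hK x (hmem x hx)).scomp x (hasDerivAt_id x).ofReal_comp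
    simpa only [ofReal_neg] using intervalIntegral.integral_eq_sub_of_hasDerivAt hderiv
      ((hH.continuous.comp continuous_ofReal).intervalIntegrable _ _)
  have hsemicircle :
      ∫ θ in 0..π, (circleMap 0 R θ * I) • H (circleMap 0 R θ) = K (-R) - K R := by
    have hderiv (θ : ℝ) : HasDerivAt (fun θ ↦ K (circleMap 0 R θ))
        ((circleMap 0 R θ * I) • H (circleMap 0 R θ)) θ :=
      (hK _ (by simp)).scomp_of_eq θ (hasDerivAt_circleMap 0 R θ) rfl
    have hcont : Continuous fun θ ↦ (circleMap 0 R θ * I) • H (circleMap 0 R θ) :=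
      ((continuous_circleMap 0 R).mul continuous_const).smul
        (hH.continuous.comp (continuous_circleMap 0 R))
    simpa [circleMap] using intervalIntegral.integral_eq_sub_of_hasDerivAt
      (fun θ _ ↦ hderiv θ) (hcont.intervalIntegrable 0 π)
  rw [hdiameter, hsemicircle, neg_sub]

theorem integral_comp_neg_add_eq_of_periodic {E : Type*} [NormedAddCommGroup E] [NormedSpace ℝ E]
    {h : ℝ → E} {T : ℝ} (hper : Function.Periodic h (2 * T)) (hcont : Continuous h) :
    ∫ θ in 0..T, (h (-θ) + h θ) = ∫ θ in 0..2 * T, h θ := by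
  have hint (a b : ℝ) : IntervalIntegrable h volume a b := hcont.intervalIntegrable a b
  calc ∫ θ in 0..T, (h (-θ) + h θ)
      = (∫ θ in 0..T, h (-θ)) + ∫ θ in 0..T, h θ :=
        intervalIntegral.integral_add ((hcont.comp continuous_neg).intervalIntegrable _ _)
          (hint _ _)
    _ = ∫ θ in -T..T, h θ := by
        rw [intervalIntegral.integral_comp_neg, neg_zero,
          intervalIntegral.integral_add_adjacent_intervals (hint _ _) (hint _ _)]
    _ = ∫ θ in 0..2 * T, h θ := by
        simpa only [zero_add, two_mul, neg_add_cancel_left] using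
          hper.intervalIntegral_add_eq (-T) 0

theorem integral_norm_sq_diameter_le {G : ℂ → ℂ} (hG : Differentiable ℂ G) :
    ∫ x in (-1 : ℝ)..1, ‖G x‖ ^ 2 ≤
      (1 / 2) * ∫ θ in 0..2 * π, ‖G (circleMap 0 1 θ)‖ ^ 2 := by
  set H : ℂ → ℂ := fun z ↦ G z * (starRingEnd ℂ) (G ((starRingEnd ℂ) z)) with hHdef
  have hH : Differentiable ℂ H :=
    hG.mul fun z ↦ by
      have hconj := (hG (star z)).star_star
      rwa [star_star] at hconj
  set h : ℝ → ℝ := fun θ ↦ ‖G (circleMap 0 1 θ)‖ ^ 2 with hhdef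
  have hcont : Continuous h := (hG.continuous.comp (continuous_circleMap 0 1)).norm.pow 2
  have hper : Function.Periodic h (2 * π) := fun θ ↦ by
    simp only [hhdef, periodic_circleMap 0 1 θ]
  have hnorm (θ : ℝ) :
      ‖(circleMap 0 1 θ * I) • H (circleMap 0 1 θ)‖ ≤ (1 / 2) * (h (-θ) + h θ) := by
    have hconj : (starRingEnd ℂ) (circleMap 0 1 θ) = circleMap 0 1 (-θ) := by
      simp [circleMap, ← Complex.exp_conj]
    simp only [hHdef, hhdef, hconj, norm_smul, norm_mul, norm_circleMap_zero, norm_I,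
      RCLike.norm_conj, abs_one]
    linarith [two_mul_le_add_sq ‖G (circleMap 0 1 θ)‖ ‖G (circleMap 0 1 (-θ))‖]
  calc ∫ x in (-1 : ℝ)..1, ‖G x‖ ^ 2
      ≤ ‖((∫ x in (-1 : ℝ)..1, ‖G x‖ ^ 2 : ℝ) : ℂ)‖ := by
        rw [norm_real]; exact le_abs_self _
    _ = ‖∫ x in (-1 : ℝ)..1, H x‖ := by
        rw [← intervalIntegral.integral_ofReal]
        simp only [hHdef, conj_ofReal, mul_conj, normSq_eq_norm_sq]
    _ = ‖∫ θ in 0..π, (circleMap 0 1 θ * I) • H (circleMap 0 1 θ)‖ := by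
        rw [integral_diameter_eq_neg_integral_semicircle hH, norm_neg]
    _ ≤ ∫ θ in 0..π, (1 / 2) * (h (-θ) + h θ) :=
        intervalIntegral.norm_integral_le_of_norm_le pi_pos.le (ae_of_all _ fun θ _ ↦ hnorm θ)
          ((((hcont.comp continuous_neg).add hcont).const_mul _).intervalIntegrable _ _)
    _ = (1 / 2) * ∫ θ in 0..2 * π, h θ := by
        rw [intervalIntegral.integral_const_mul, integral_comp_neg_add_eq_of_periodic hper hcont]

end Semicircle

section Approximation

theorem exists_differentiable_re_eq_of_mem_span_fourier {T : ℝ} {f : C(AddCircle T, ℂ)}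
    (hf : f ∈ Submodule.span ℂ (Set.range (@fourier T))) :
    ∃ q : ℂ → ℂ, Differentiable ℂ q ∧ ∀ x, (f x).re = (q (AddCircle.toCircle x)).re := by
  -- Quantifying over `c` makes the claim stable under multiplication by complex scalars.
  suffices h : ∀ c : ℂ, ∃ q : ℂ → ℂ, Differentiable ℂ q ∧
      ∀ x, (c * f x).re = (q (AddCircle.toCircle x)).re by
    simpa only [one_mul] using h 1
  induction hf using Submodule.span_induction with
  | mem f hf =>
    intro c
    obtain ⟨n, rfl⟩ := hf
    obtain ⟨n, rfl | rfl⟩ := n.eq_nat_or_neg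
    · exact ⟨fun z ↦ c * z ^ n, by fun_prop, fun x ↦ by
        simp [fourier_apply, AddCircle.toCircle_nsmul]⟩
    · refine ⟨fun z ↦ (starRingEnd ℂ) c * z ^ n, by fun_prop, fun x ↦ ?_⟩
      rw [fourier_neg, ← conj_re]
      simp [fourier_apply, AddCircle.toCircle_nsmul]
  | zero => exact fun _ ↦ ⟨0, by fun_prop, by simp⟩
  | add f g _ _ hf hg =>
    intro c
    obtain ⟨q, hq, hfq⟩ := hf c
    obtain ⟨q', hq', hgq'⟩ := hg c
    exact ⟨q + q', hq.add hq', fun x ↦ by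
      simp only [ContinuousMap.add_apply, mul_add, add_re, hfq, hgq', Pi.add_apply]⟩
  | smul a f _ hf =>
    intro c
    simpa only [ContinuousMap.smul_apply, smul_eq_mul, ← mul_assoc] using hf (c * a)

theorem exists_differentiable_re_approx {u : ℂ → ℝ} (hu : ContinuousOn u (Metric.sphere 0 1))
    {δ : ℝ} (hδ : 0 < δ) :
    ∃ q : ℂ → ℂ, Differentiable ℂ q ∧ ∀ z ∈ Metric.sphere (0 : ℂ) 1, |(q z).re - u z| < δ := by
  have : Fact (0 < 2 * π) := ⟨two_pi_pos⟩
  let U : C(AddCircle (2 * π), ℂ) := ⟨fun x ↦ (u (AddCircle.toCircle x) : ℂ),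
    continuous_ofReal.comp (hu.comp_continuous
      (continuous_subtype_val.comp AddCircle.continuous_toCircle)
      fun x ↦ mem_sphere_zero_iff_norm.2 (Circle.norm_coe _))⟩
  have hU : U ∈ closure (Submodule.span ℂ (Set.range (@fourier (2 * π))) : Set _) := by
    rw [← Submodule.topologicalClosure_coe, span_fourier_closure_eq_top]
    trivial
  obtain ⟨f, hf, hfU⟩ := Metric.mem_closure_iff.1 hU δ hδ
  obtain ⟨q, hq, hfq⟩ := exists_differentiable_re_eq_of_mem_span_fourier hf
  refine ⟨q, hq, fun z hz ↦ ?_⟩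
  obtain ⟨x, hx⟩ := (AddCircle.homeomorphCircle two_pi_pos.ne').surjective (⟨z, hz⟩ : Circle)
  obtain rfl : ((AddCircle.toCircle x : Circle) : ℂ) = z := by
    rw [← AddCircle.homeomorphCircle_apply two_pi_pos.ne', hx]
  calc |(q (AddCircle.toCircle x)).re - u (AddCircle.toCircle x)|
      = |(f x - U x).re| := by rw [sub_re, hfq]; rfl
    _ ≤ ‖f x - U x‖ := abs_re_le_norm _
    _ ≤ dist f U := by rw [← dist_eq_norm]; exact ContinuousMap.dist_apply_le_dist x
    _ < δ := by rwa [dist_comm]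

theorem exists_differentiable_re_between {a b : ℂ → ℝ} (ha : ContinuousOn a (Metric.sphere 0 1))
    (hb : ContinuousOn b (Metric.sphere 0 1)) (hab : ∀ z ∈ Metric.sphere (0 : ℂ) 1, a z < b z) :
    ∃ q : ℂ → ℂ, Differentiable ℂ q ∧
      ∀ z ∈ Metric.sphere (0 : ℂ) 1, a z ≤ (q z).re ∧ (q z).re ≤ b z := by
  obtain ⟨δ, hδ, hgap⟩ := (isCompact_sphere (0 : ℂ) 1).exists_forall_le' (hb.sub ha)
    fun z hz ↦ sub_pos.2 (hab z hz)
  obtain ⟨q, hq, hqu⟩ := exists_differentiable_re_approx ((ha.add hb).div_const 2) (half_pos hδ)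
  refine ⟨q, hq, fun z hz ↦ ?_⟩
  have hz' := abs_lt.1 (hqu z hz)
  have hgapz := hgap z hz
  simp only [Pi.sub_apply, Pi.add_apply] at hz' hgapz
  constructor <;> linarith [hz'.1, hz'.2]

end Approximation

section DiscAlgebra

variable {E : Type*} [NormedAddCommGroup E] [NormedSpace ℂ E]

theorem norm_rpow_le_exp_re_of_frontier {U : Set ℂ} (hU : Bornology.IsBounded U) {f : ℂ → E}
    {q : ℂ → ℂ} {p : ℝ} (hf : DiffContOnCl ℂ f U) (hq : DiffContOnCl ℂ q U) (hp : 0 < p)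
    (hle : ∀ z ∈ frontier U, ‖f z‖ ^ p ≤ rexp (q z).re) {z : ℂ} (hz : z ∈ closure U) :
    ‖f z‖ ^ p ≤ rexp (q z).re := by
  have hiff (w : ℂ) : ‖cexp (-(p⁻¹ : ℝ) * q w) • f w‖ ≤ 1 ↔ ‖f w‖ ^ p ≤ rexp (q w).re := by
    rw [norm_smul, Complex.norm_exp, ← ofReal_neg, re_ofReal_mul, neg_mul, Real.exp_neg,
      inv_mul_le_one₀ (Real.exp_pos _), mul_comm, Real.exp_mul,
      Real.le_rpow_inv_iff_of_pos (norm_nonneg _) (Real.exp_pos _).le hp]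
  have hd : DiffContOnCl ℂ (fun w ↦ cexp (-(p⁻¹ : ℝ) * q w) • f w) U :=
    (Complex.differentiable_exp.comp_diffContOnCl (hq.const_smul (-(p⁻¹ : ℝ) : ℂ))).smul hf
  exact (hiff z).1 <|
    norm_le_of_forall_mem_frontier_norm_le hU hd (fun w hw ↦ (hiff w).2 (hle w hw)) hz

theorem exists_differentiable_norm_rpow_le_exp_re {f : ℂ → E}
    (hf : DiffContOnCl ℂ f (Metric.ball 0 1)) {p : ℝ} (hp : 0 < p) {ε : ℝ} (hε : 0 < ε) :
    ∃ q : ℂ → ℂ, Differentiable ℂ q ∧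
      (∀ z ∈ Metric.closedBall (0 : ℂ) 1, ‖f z‖ ^ p ≤ rexp (q z).re) ∧
      ∀ z ∈ Metric.sphere (0 : ℂ) 1, rexp (q z).re ≤ ‖f z‖ ^ p + ε := by
  have hlog {η : ℝ} (hη : 0 < η) :
      ContinuousOn (fun z ↦ Real.log (‖f z‖ ^ p + η)) (Metric.sphere 0 1) :=
    (((hf.continuousOn_ball.mono Metric.sphere_subset_closedBall).norm.rpow_const
      fun _ _ ↦ Or.inr hp.le).add continuousOn_const).log
        fun z _ ↦ (by positivity : 0 < ‖f z‖ ^ p + η).ne'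
  obtain ⟨q, hq, hqf⟩ := exists_differentiable_re_between (hlog (half_pos hε)) (hlog hε)
    fun z _ ↦ Real.log_lt_log (by positivity) (by linarith)
  have hlower : ∀ z ∈ frontier (Metric.ball (0 : ℂ) 1), ‖f z‖ ^ p ≤ rexp (q z).re := by
    intro z hz
    have hlog_le := (hqf z (by rwa [frontier_ball _ one_ne_zero] at hz)).1
    linarith [(Real.log_le_iff_le_exp (by positivity)).1 hlog_le]
  refine ⟨q, hq, fun z hz ↦ ?_, fun z hz ↦ ?_⟩
  · exact norm_rpow_le_exp_re_of_frontier Metric.isBounded_ball hf hq.diffContOnCl hp hlower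
      (by rwa [closure_ball _ one_ne_zero])
  · exact (Real.le_log_iff_exp_le (by positivity)).1 (hqf z hz).2

theorem integral_norm_rpow_diameter_le {f : ℂ → E} (hf : DiffContOnCl ℂ f (Metric.ball 0 1))
    {p : ℝ} (hp : 0 < p) :
    ∫ x in (-1 : ℝ)..1, ‖f x‖ ^ p ≤
      (1 / 2) * ∫ θ in 0..2 * π, ‖f (circleMap 0 1 θ)‖ ^ p := by
  have hfx : ContinuousOn (fun x : ℝ ↦ ‖f x‖ ^ p) (Set.uIcc (-1) 1) :=
    (hf.continuousOn_ball.comp continuous_ofReal.continuousOn fun x hx ↦ by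
      simpa [abs_le] using hx).norm.rpow_const fun _ _ ↦ Or.inr hp.le
  have hfθ : Continuous fun θ ↦ ‖f (circleMap 0 1 θ)‖ ^ p :=
    (hf.continuousOn_ball.comp_continuous (continuous_circleMap 0 1) fun θ ↦ by
      simp).norm.rpow_const fun _ ↦ Or.inr hp.le
  refine le_of_forall_pos_le_add fun ε hε ↦ ?_
  obtain ⟨q, hq, hdisc, hcircle⟩ :=
    exists_differentiable_norm_rpow_le_exp_re hf hp (div_pos hε pi_pos)
  have hG : Differentiable ℂ fun z ↦ cexp (q z / 2) := (hq.div_const 2).cexp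
  have hsq (z : ℂ) : ‖cexp (q z / 2)‖ ^ 2 = rexp (q z).re := by
    rw [← norm_pow, ← Complex.exp_nat_mul, Complex.norm_exp, Nat.cast_ofNat,
      mul_div_cancel₀ _ two_ne_zero]
  have hFejerRiesz := integral_norm_sq_diameter_le hG
  simp only [hsq] at hFejerRiesz
  have hexp : Continuous fun z ↦ rexp (q z).re :=
    Real.continuous_exp.comp (continuous_re.comp hq.continuous)
  calc ∫ x in (-1 : ℝ)..1, ‖f x‖ ^ p
      ≤ ∫ x in (-1 : ℝ)..1, rexp (q x).re :=
        intervalIntegral.integral_mono_on (by norm_num) hfx.intervalIntegrable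
          ((hexp.comp continuous_ofReal).intervalIntegrable _ _)
          fun x hx ↦ hdisc x (by simpa [abs_le] using hx)
    _ ≤ (1 / 2) * ∫ θ in 0..2 * π, rexp (q (circleMap 0 1 θ)).re := hFejerRiesz
    _ ≤ (1 / 2) * ∫ θ in 0..2 * π, (‖f (circleMap 0 1 θ)‖ ^ p + ε / π) := by
        gcongr
        exact intervalIntegral.integral_mono_on two_pi_pos.le
          ((hexp.comp (continuous_circleMap 0 1)).intervalIntegrable _ _)
          ((hfθ.add continuous_const).intervalIntegrable _ _)
          fun θ _ ↦ hcircle _ (circleMap_mem_sphere 0 zero_le_one θ)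
    _ = (1 / 2) * (∫ θ in 0..2 * π, ‖f (circleMap 0 1 θ)‖ ^ p) + ε := by
        rw [intervalIntegral.integral_add (hfθ.intervalIntegrable _ _)
          intervalIntegrable_const, intervalIntegral.integral_const, smul_eq_mul]
        field_simp
        ring

theorem diffContOnCl_comp_mul_left {f : ℂ → E} (hf : DifferentiableOn ℂ f (Metric.ball 0 1))
    {a : ℂ} (ha : ‖a‖ < 1) : DiffContOnCl ℂ (fun z ↦ f (a * z)) (Metric.ball 0 1) := by
  refine DifferentiableOn.diffContOnCl ?_
  rw [closure_ball _ one_ne_zero]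
  refine hf.comp (differentiableOn_id.const_mul a) fun z hz ↦ ?_
  rw [mem_closedBall_zero_iff] at hz
  simpa only [mem_ball_zero_iff, id, norm_mul] using mul_lt_one_of_nonneg_of_lt_one_left
    (norm_nonneg a) ha hz

theorem integral_norm_rpow_diameter_le_circle {f : ℂ → E}
    (hf : DifferentiableOn ℂ f (Metric.ball 0 1)) {p : ℝ} (hp : 0 < p) {r : ℝ} (hr : |r| < 1)
    (t : ℝ) :
    ∫ x in (-1 : ℝ)..1, ‖f (circleMap 0 (r * x) t)‖ ^ p ≤
      (1 / 2) * ∫ θ in 0..2 * π, ‖f (circleMap 0 r θ)‖ ^ p := by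
  have hdiameter (x : ℝ) : circleMap 0 r t * x = circleMap 0 (r * x) t := by
    simp only [circleMap_zero, ofReal_mul]; ring
  have hcircle (θ : ℝ) : circleMap 0 r t * circleMap 0 1 θ = circleMap 0 r (θ + t) := by
    simp only [circleMap_zero, ofReal_add, ofReal_one, add_mul, Complex.exp_add]; ring
  have hper : Function.Periodic (fun θ ↦ ‖f (circleMap 0 r θ)‖ ^ p) (2 * π) := fun θ ↦ by
    simp only [periodic_circleMap 0 r θ]
  have hrotation : ∫ θ in 0..2 * π, ‖f (circleMap 0 r (θ + t))‖ ^ p =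
      ∫ θ in 0..2 * π, ‖f (circleMap 0 r θ)‖ ^ p := by
    rw [intervalIntegral.integral_comp_add_right fun θ ↦ ‖f (circleMap 0 r θ)‖ ^ p, zero_add,
      add_comm (2 * π) t, hper.intervalIntegral_add_eq t 0, zero_add]
  simpa only [hdiameter, hcircle, hrotation] using integral_norm_rpow_diameter_le
    (diffContOnCl_comp_mul_left hf (a := circleMap 0 r t) (by simpa using hr)) hp

end DiscAlgebra

section RpowIntegrals

variable {α E : Type*} [MeasurableSpace α] {μ : Measure α} [NormedAddCommGroup E]

theorem integral_norm_rpow_eq_toReal_lintegral {g : α → E} (hg : AEMeasurable (‖g ·‖ₑ) μ) {p : ℝ}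
    (hp : 0 ≤ p) : ∫ x, ‖g x‖ ^ p ∂μ = (∫⁻ x, ‖g x‖ₑ ^ p ∂μ).toReal := by
  rw [← integral_toReal (hg.pow_const p)
    (ae_of_all _ fun x ↦ ENNReal.rpow_lt_top_of_nonneg hp enorm_ne_top)]
  simp only [← ENNReal.toReal_rpow, toReal_enorm]

theorem lintegral_enorm_rpow_eq_ofReal_integral {g : ℝ → E} {a b : ℝ}
    (hg : ContinuousOn g (Set.Icc a b)) (hab : a ≤ b) {p : ℝ} (hp : 0 ≤ p) :
    ∫⁻ x in Set.Ioc a b, ‖g x‖ₑ ^ p = ENNReal.ofReal (∫ x in a..b, ‖g x‖ ^ p) := by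
  have hint : IntegrableOn (fun x ↦ ‖g x‖ ^ p) (Set.Ioc a b) :=
    (hg.norm.rpow_const fun _ _ ↦ Or.inr hp).integrableOn_Icc.mono_set Set.Ioc_subset_Icc_self
  rw [intervalIntegral.integral_of_le hab,
    ofReal_integral_eq_lintegral_ofReal hint (ae_of_all _ fun x ↦ by positivity)]
  simp only [← ENNReal.ofReal_rpow_of_nonneg (norm_nonneg _) hp, ofReal_norm]

theorem lintegral_le_liminf_of_tendsto {u : ℕ → α → ℝ≥0∞} {v : α → ℝ≥0∞}
    (hu : ∀ n, AEMeasurable (u n) μ)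
    (huv : ∀ᵐ x ∂μ, Tendsto (fun n ↦ u n x) atTop (𝓝 (v x))) :
    ∫⁻ x, v x ∂μ ≤ liminf (fun n ↦ ∫⁻ x, u n x ∂μ) atTop :=
  (lintegral_congr_ae (huv.mono fun _ hx ↦ hx.liminf_eq.symm)).trans_le (lintegral_liminf_le' hu)

theorem rpow_le_min_add_mul_rpow {s p : ℝ} (hs : 0 ≤ s) (hsp : s < p) {δ : ℝ≥0∞} (hδ : δ ≠ 0)
    (hδ' : δ ≠ ∞) (t : ℝ≥0∞) : t ^ s ≤ min (t ^ s) (δ ^ (-s)) + δ ^ (p - s) * t ^ p := by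
  rcases le_total t δ⁻¹ with h | h
  · have hts : t ^ s ≤ δ ^ (-s) := by
      simpa only [ENNReal.inv_rpow, ENNReal.rpow_neg] using ENNReal.rpow_le_rpow h hs
    exact (le_min le_rfl hts).trans le_self_add
  · have hone : 1 ≤ (δ * t) ^ (p - s) :=
      ENNReal.one_le_rpow
        ((ENNReal.inv_le_iff_le_mul (fun _ ↦ hδ) fun hδtop ↦ absurd hδtop hδ').1 h) (sub_pos.2 hsp)
    calc t ^ s ≤ (δ * t) ^ (p - s) * t ^ s := le_mul_of_one_le_left' hone
      _ = δ ^ (p - s) * t ^ p := by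
        rw [ENNReal.mul_rpow_of_nonneg _ _ (sub_pos.2 hsp).le, mul_assoc,
          ← ENNReal.rpow_add_of_nonneg _ _ (sub_pos.2 hsp).le hs, sub_add_cancel]
      _ ≤ _ := le_add_self

theorem limsup_lintegral_rpow_le_add [IsFiniteMeasure μ] {s p : ℝ} (hs : 0 ≤ s) (hsp : s < p)
    {u : ℕ → α → ℝ≥0∞} {v : α → ℝ≥0∞} (hu : ∀ n, AEMeasurable (u n) μ) {C : ℝ≥0∞}
    (huC : ∀ n, ∫⁻ x, u n x ^ p ∂μ ≤ C)
    (huv : ∀ᵐ x ∂μ, Tendsto (fun n ↦ u n x) atTop (𝓝 (v x))) {δ : ℝ≥0∞} (hδ : δ ≠ 0)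
    (hδ' : δ ≠ ∞) :
    limsup (fun n ↦ ∫⁻ x, u n x ^ s ∂μ) atTop ≤ ∫⁻ x, v x ^ s ∂μ + C * δ ^ (p - s) := by
  have hmeas (n : ℕ) : AEMeasurable (fun x ↦ min (u n x ^ s) (δ ^ (-s))) μ :=
    ((hu n).pow_const s).min aemeasurable_const
  have hmin : Tendsto (fun n ↦ ∫⁻ x, min (u n x ^ s) (δ ^ (-s)) ∂μ) atTop
      (𝓝 (∫⁻ x, min (v x ^ s) (δ ^ (-s)) ∂μ)) := by
    refine tendsto_lintegral_of_dominated_convergence' (fun _ ↦ δ ^ (-s)) hmeas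
      (fun n ↦ ae_of_all _ fun x ↦ min_le_right _ _) ?_
      (huv.mono fun x hx ↦ (hx.ennrpow_const s).min tendsto_const_nhds)
    rw [lintegral_const]
    exact ENNReal.mul_ne_top (ENNReal.rpow_ne_top_of_ne_zero hδ hδ') (measure_ne_top μ _)
  have hle (n : ℕ) : ∫⁻ x, u n x ^ s ∂μ ≤
      ∫⁻ x, min (u n x ^ s) (δ ^ (-s)) ∂μ + C * δ ^ (p - s) :=
    calc ∫⁻ x, u n x ^ s ∂μ
        ≤ ∫⁻ x, (min (u n x ^ s) (δ ^ (-s)) + δ ^ (p - s) * u n x ^ p) ∂μ :=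
          lintegral_mono fun x ↦ rpow_le_min_add_mul_rpow hs hsp hδ hδ' _
      _ = ∫⁻ x, min (u n x ^ s) (δ ^ (-s)) ∂μ + δ ^ (p - s) * ∫⁻ x, u n x ^ p ∂μ := by
          rw [lintegral_add_left' (hmeas n), lintegral_const_mul'' _ ((hu n).pow_const p)]
      _ ≤ ∫⁻ x, min (u n x ^ s) (δ ^ (-s)) ∂μ + C * δ ^ (p - s) := by
          rw [mul_comm C]
          gcongr
          exact huC n
  calc limsup (fun n ↦ ∫⁻ x, u n x ^ s ∂μ) atTop
      ≤ limsup (fun n ↦ ∫⁻ x, min (u n x ^ s) (δ ^ (-s)) ∂μ + C * δ ^ (p - s)) atTop :=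
        limsup_le_limsup (Eventually.of_forall hle)
    _ = ∫⁻ x, min (v x ^ s) (δ ^ (-s)) ∂μ + C * δ ^ (p - s) := (hmin.add_const _).limsup_eq
    _ ≤ ∫⁻ x, v x ^ s ∂μ + C * δ ^ (p - s) := by
        gcongr
        exact min_le_left _ _

theorem limsup_lintegral_rpow_le [IsFiniteMeasure μ] {s p : ℝ} (hs : 0 ≤ s) (hsp : s < p)
    {u : ℕ → α → ℝ≥0∞} {v : α → ℝ≥0∞} (hu : ∀ n, AEMeasurable (u n) μ) {C : ℝ≥0∞} (hC : C ≠ ∞)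
    (huC : ∀ n, ∫⁻ x, u n x ^ p ∂μ ≤ C)
    (huv : ∀ᵐ x ∂μ, Tendsto (fun n ↦ u n x) atTop (𝓝 (v x))) :
    limsup (fun n ↦ ∫⁻ x, u n x ^ s ∂μ) atTop ≤ ∫⁻ x, v x ^ s ∂μ := by
  have hlim : Tendsto (fun δ : ℝ≥0∞ ↦ ∫⁻ x, v x ^ s ∂μ + C * δ ^ (p - s)) (𝓝[>] 0)
      (𝓝 (∫⁻ x, v x ^ s ∂μ)) := by
    simpa only [add_zero] using ((ENNReal.tendsto_const_mul_rpow_nhds_zero_of_pos hC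
      (sub_pos.2 hsp)).mono_left nhdsWithin_le_nhds).const_add (∫⁻ x, v x ^ s ∂μ)
  have : (𝓝[>] (0 : ℝ≥0∞)).NeBot := nhdsGT_neBot_of_exists_gt ⟨1, one_pos⟩
  refine ge_of_tendsto hlim ?_
  filter_upwards [Ioo_mem_nhdsGT (one_pos : (0 : ℝ≥0∞) < 1)] with δ hδ
  exact limsup_lintegral_rpow_le_add hs hsp hu huC huv hδ.1.ne'
    (hδ.2.trans ENNReal.one_lt_top).ne

theorem tendsto_lintegral_rpow_of_lintegral_rpow_le [IsFiniteMeasure μ] {s p : ℝ} (hs : 0 ≤ s)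
    (hsp : s < p) {u : ℕ → α → ℝ≥0∞} {v : α → ℝ≥0∞} (hu : ∀ n, AEMeasurable (u n) μ) {C : ℝ≥0∞}
    (hC : C ≠ ∞) (huC : ∀ n, ∫⁻ x, u n x ^ p ∂μ ≤ C)
    (huv : ∀ᵐ x ∂μ, Tendsto (fun n ↦ u n x) atTop (𝓝 (v x))) :
    Tendsto (fun n ↦ ∫⁻ x, u n x ^ s ∂μ) atTop (𝓝 (∫⁻ x, v x ^ s ∂μ)) :=
  tendsto_of_le_liminf_of_limsup_le
    (lintegral_le_liminf_of_tendsto (fun n ↦ (hu n).pow_const s)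
      (huv.mono fun _ hx ↦ hx.ennrpow_const s))
    (limsup_lintegral_rpow_le hs hsp hu hC huC huv)

theorem continuousAt_const_rpow_of_pos (a : ℝ≥0∞) {p : ℝ} (hp : 0 < p) :
    ContinuousAt (fun s : ℝ ↦ a ^ s) p := by
  induction a with
  | top =>
    refine continuousAt_const.congr (f := fun _ ↦ ∞) ?_
    filter_upwards [lt_mem_nhds hp] with s hs using (ENNReal.top_rpow_of_pos hs).symm
  | coe a =>
    have hcoe : ContinuousAt (fun s : ℝ ↦ ((a ^ s : NNReal) : ℝ≥0∞)) p :=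
      ENNReal.continuous_coe.continuousAt.comp
        ((NNReal.continuousAt_rpow (Or.inr hp)).comp (continuousAt_const.prodMk continuousAt_id))
    refine hcoe.congr ?_
    filter_upwards [lt_mem_nhds hp] with s hs using ENNReal.coe_rpow_of_nonneg _ hs.le

theorem rpow_le_one_add_rpow {s p : ℝ} (hs : 0 ≤ s) (hsp : s ≤ p) (a : ℝ≥0∞) :
    a ^ s ≤ 1 + a ^ p := by
  rcases le_total a 1 with h | h
  · exact (ENNReal.rpow_le_one h hs).trans le_self_add
  · exact (ENNReal.rpow_le_rpow_of_exponent_le h hsp).trans le_add_self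

theorem lintegral_rpow_le_of_forall_lt {β : Type*} [MeasurableSpace β] {ν : Measure β}
    [IsFiniteMeasure ν] {u : α → ℝ≥0∞} {v : β → ℝ≥0∞} (hu : AEMeasurable u μ)
    (hv : AEMeasurable v ν) {p : ℝ} (hp : 0 < p) (hvp : ∫⁻ y, v y ^ p ∂ν ≠ ∞) {c : ℝ≥0∞}
    (hc : c ≠ ∞)
    (hle : ∀ s ∈ Set.Ioo 0 p, ∫⁻ x, u x ^ s ∂μ ≤ c * ∫⁻ y, v y ^ s ∂ν) :
    ∫⁻ x, u x ^ p ∂μ ≤ c * ∫⁻ y, v y ^ p ∂ν := by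
  obtain ⟨s, -, hs, hslim⟩ := exists_seq_strictMono_tendsto' hp
  have hright : Tendsto (fun n ↦ ∫⁻ y, v y ^ s n ∂ν) atTop (𝓝 (∫⁻ y, v y ^ p ∂ν)) := by
    refine tendsto_lintegral_of_dominated_convergence' (fun y ↦ 1 + v y ^ p)
      (fun n ↦ hv.pow_const _)
      (fun n ↦ ae_of_all _ fun y ↦ rpow_le_one_add_rpow (hs n).1.le (hs n).2.le _) ?_
      (ae_of_all _ fun y ↦ (continuousAt_const_rpow_of_pos _ hp).tendsto.comp hslim)
    rw [lintegral_add_left measurable_const, lintegral_one]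
    exact ENNReal.add_ne_top.2 ⟨measure_ne_top ν _, hvp⟩
  calc ∫⁻ x, u x ^ p ∂μ
      ≤ liminf (fun n ↦ ∫⁻ x, u x ^ s n ∂μ) atTop :=
        lintegral_le_liminf_of_tendsto (fun n ↦ hu.pow_const _)
          (ae_of_all _ fun x ↦ (continuousAt_const_rpow_of_pos _ hp).tendsto.comp hslim)
    _ ≤ liminf (fun n ↦ c * ∫⁻ y, v y ^ s n ∂ν) atTop :=
        liminf_le_liminf (Eventually.of_forall fun n ↦ hle _ (hs n))
    _ = c * ∫⁻ y, v y ^ p ∂ν := (ENNReal.Tendsto.const_mul hright (Or.inr hc)).liminf_eq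

end RpowIntegrals

section CircleMap

variable {X : Type*} [TopologicalSpace X] {f : ℂ → X}

theorem continuous_comp_circleMap_of_abs_lt_one (hf : ContinuousOn f (Metric.ball 0 1)) {r : ℝ}
    (hr : |r| < 1) : Continuous fun θ ↦ f (circleMap 0 r θ) :=
  hf.comp_continuous (continuous_circleMap 0 r) fun θ ↦ by simpa using hr

theorem continuousOn_comp_circleMap_diameter (hf : ContinuousOn f (Metric.ball 0 1)) (t : ℝ) :
    ContinuousOn (fun x ↦ f (circleMap 0 x t)) (Set.Ioo (-1) 1) := by
  refine hf.comp (by unfold circleMap; fun_prop) fun x hx ↦ ?_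
  simpa [abs_lt] using hx

theorem continuousOn_comp_circleMap_mul_diameter (hf : ContinuousOn f (Metric.ball 0 1)) {r : ℝ}
    (hr : |r| < 1) (t : ℝ) :
    ContinuousOn (fun x ↦ f (circleMap 0 (r * x) t)) (Set.Icc (-1) 1) := by
  refine (continuousOn_comp_circleMap_diameter hf t).comp
    (continuous_const_mul r).continuousOn fun x hx ↦ ?_
  rw [Set.mem_Icc, ← abs_le] at hx
  rw [Set.mem_Ioo, ← abs_lt, abs_mul]
  exact mul_lt_one_of_nonneg_of_lt_one_left (abs_nonneg r) hr hx

/-- `F` is almost everywhere the radial boundary value `F(θ) = lim_{r → 1⁻} f(re^{iθ})` of the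
function `f` on the unit disc. -/
def HasRadialLimits (f : ℂ → X) (F : ℝ → X) : Prop :=
  ∀ᵐ θ : ℝ, Tendsto (fun r : ℝ ↦ f (circleMap 0 r θ)) (𝓝[<] 1) (𝓝 (F θ))

end CircleMap

section RadialLimits

variable {E : Type*} [NormedAddCommGroup E] {f : ℂ → E} {F : ℝ → E}

theorem aemeasurable_enorm_comp_circleMap (hf : ContinuousOn f (Metric.ball 0 1)) {r : ℝ}
    (hr : r ∈ Set.Ioo (0 : ℝ) 1) (μ : Measure ℝ) :
    AEMeasurable (fun θ ↦ ‖f (circleMap 0 r θ)‖ₑ) μ :=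
  (continuous_comp_circleMap_of_abs_lt_one hf
    ((abs_of_pos hr.1).trans_lt hr.2)).enorm.aemeasurable

namespace HasRadialLimits

theorem ae_tendsto_enorm (hF : HasRadialLimits f F) {r : ℕ → ℝ}
    (hr : ∀ n, r n ∈ Set.Ioo (0 : ℝ) 1) (hlim : Tendsto r atTop (𝓝 1)) :
    ∀ᵐ θ ∂volume.restrict (Set.Ioc 0 (2 * π)),
      Tendsto (fun n ↦ ‖f (circleMap 0 (r n) θ)‖ₑ) atTop (𝓝 ‖F θ‖ₑ) := by
  filter_upwards [ae_restrict_of_ae hF] with θ hθ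
  exact (hθ.comp (tendsto_nhdsWithin_iff.2 ⟨hlim, Eventually.of_forall fun n ↦ (hr n).2⟩)).enorm

theorem aemeasurable_enorm (hF : HasRadialLimits f F)
    (hf : ContinuousOn f (Metric.ball 0 1)) :
    AEMeasurable (fun θ ↦ ‖F θ‖ₑ) (volume.restrict (Set.Ioc 0 (2 * π))) := by
  obtain ⟨r, -, hr, hlim⟩ := exists_seq_strictMono_tendsto' (zero_lt_one' ℝ)
  exact aemeasurable_of_tendsto_metrizable_ae atTop
    (fun n ↦ aemeasurable_enorm_comp_circleMap hf (hr n) _) (hF.ae_tendsto_enorm hr hlim)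

theorem toLp_prod {E₁ E₂ : Type*} [NormedAddCommGroup E₁] [NormedAddCommGroup E₂] {φ : ℂ → E₁}
    {ψ : ℂ → E₂} {Fφ : ℝ → E₁} {Fψ : ℝ → E₂} (hφ : HasRadialLimits φ Fφ)
    (hψ : HasRadialLimits ψ Fψ) (q : ℝ≥0∞) [Fact (1 ≤ q)] :
    HasRadialLimits (fun z ↦ WithLp.toLp q (φ z, ψ z)) fun θ ↦ WithLp.toLp q (Fφ θ, Fψ θ) := by
  filter_upwards [hφ, hψ] with θ hφθ hψθ
  exact ((WithLp.prod_continuous_toLp q E₁ E₂).tendsto _).comp (hφθ.prodMk_nhds hψθ)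

end HasRadialLimits

end RadialLimits

section Hardy

theorem add_rpow_le_two_rpow_mul {a b p : ℝ} (ha : 0 ≤ a) (hb : 0 ≤ b) (hp : 0 ≤ p) :
    (a + b) ^ p ≤ 2 ^ p * (a ^ p + b ^ p) := by
  have hmax : (max a b) ^ p ≤ a ^ p + b ^ p := by
    rcases max_choice a b with h | h <;> rw [h]
    · exact le_add_of_nonneg_right (by positivity)
    · exact le_add_of_nonneg_left (by positivity)
  calc (a + b) ^ p ≤ (2 * max a b) ^ p := by
        gcongr
        linarith [le_max_left a b, le_max_right a b]
    _ = 2 ^ p * (max a b) ^ p := Real.mul_rpow zero_le_two (le_max_of_le_left ha)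
    _ ≤ 2 ^ p * (a ^ p + b ^ p) := by gcongr

variable {E E₁ E₂ : Type*} [NormedAddCommGroup E] [NormedSpace ℂ E] [NormedAddCommGroup E₁]
  [NormedSpace ℂ E₁] [NormedAddCommGroup E₂] [NormedSpace ℂ E₂]

theorem differentiableOn_toLp_prod (q : ℝ≥0∞) [Fact (1 ≤ q)] {φ : ℂ → E₁} {ψ : ℂ → E₂} {s : Set ℂ}
    (hφ : DifferentiableOn ℂ φ s) (hψ : DifferentiableOn ℂ ψ s) :
    DifferentiableOn ℂ (fun z ↦ WithLp.toLp q (φ z, ψ z)) s :=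
  (WithLp.prodContinuousLinearEquiv q ℂ E₁ E₂).symm.differentiable.comp_differentiableOn
    (hφ.prodMk hψ)

theorem lintegral_enorm_rpow_diameter_le_circle {f : ℂ → E}
    (hf : DifferentiableOn ℂ f (Metric.ball 0 1)) {p : ℝ} (hp : 0 < p) {r : ℝ} (hr : |r| < 1)
    (t : ℝ) :
    ∫⁻ x in Set.Ioo (-1) 1, ‖f (circleMap 0 (r * x) t)‖ₑ ^ p ≤
      2⁻¹ * ∫⁻ θ in Set.Ioc 0 (2 * π), ‖f (circleMap 0 r θ)‖ₑ ^ p := by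
  have hdisc := continuousOn_comp_circleMap_mul_diameter hf.continuousOn hr t
  have hcircle := continuous_comp_circleMap_of_abs_lt_one hf.continuousOn hr
  have hhalf : (2⁻¹ : ℝ≥0∞) = ENNReal.ofReal (1 / 2) := by
    rw [one_div, ENNReal.ofReal_inv_of_pos two_pos, ENNReal.ofReal_ofNat]
  rw [restrict_Ioo_eq_restrict_Ioc,
    lintegral_enorm_rpow_eq_ofReal_integral hdisc (by norm_num) hp.le,
    lintegral_enorm_rpow_eq_ofReal_integral hcircle.continuousOn two_pi_pos.le hp.le, hhalf,
    ← ENNReal.ofReal_mul one_half_pos.le]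
  exact ENNReal.ofReal_le_ofReal (integral_norm_rpow_diameter_le_circle hf hp hr t)

/-- Membership in the Hardy space `H^p` of the unit disc, for functions with values in a complex
normed space: holomorphy together with bounded integral means `∫ ‖f(re^{iθ})‖^p dθ`, `r < 1`. -/
def MemHardy (p : ℝ) (f : ℂ → E) : Prop :=
  DifferentiableOn ℂ f (Metric.ball 0 1) ∧
    ∃ C : ℝ, ∀ r : ℝ, 0 ≤ r → r < 1 → ∫ θ in 0..2 * π, ‖f (circleMap 0 r θ)‖ ^ p ≤ C

namespace MemHardy

theorem toLp_prod {p : ℝ} {φ : ℂ → E₁} {ψ : ℂ → E₂} (hφ : MemHardy p φ)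
    (hψ : MemHardy p ψ) (hp : 0 ≤ p) : MemHardy p fun z ↦ WithLp.toLp 1 (φ z, ψ z) := by
  obtain ⟨hφd, C₁, hC₁⟩ := hφ
  obtain ⟨hψd, C₂, hC₂⟩ := hψ
  refine ⟨differentiableOn_toLp_prod 1 hφd hψd, 2 ^ p * (C₁ + C₂), fun r hr0 hr1 ↦ ?_⟩
  have hr : |r| < 1 := by rwa [abs_of_nonneg hr0]
  have hφc : Continuous fun θ ↦ ‖φ (circleMap 0 r θ)‖ :=
    (continuous_comp_circleMap_of_abs_lt_one hφd.continuousOn hr).norm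
  have hψc : Continuous fun θ ↦ ‖ψ (circleMap 0 r θ)‖ :=
    (continuous_comp_circleMap_of_abs_lt_one hψd.continuousOn hr).norm
  have hint {h : ℝ → ℝ} (hh : Continuous h) :
      IntervalIntegrable (fun θ ↦ h θ ^ p) volume 0 (2 * π) :=
    (hh.rpow_const fun _ ↦ Or.inr hp).intervalIntegrable _ _
  simp only [WithLp.prod_norm_eq_of_L1]
  calc ∫ θ in 0..2 * π, (‖φ (circleMap 0 r θ)‖ + ‖ψ (circleMap 0 r θ)‖) ^ p
      ≤ ∫ θ in 0..2 * π, 2 ^ p * (‖φ (circleMap 0 r θ)‖ ^ p + ‖ψ (circleMap 0 r θ)‖ ^ p) :=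
        intervalIntegral.integral_mono_on two_pi_pos.le (hint (hφc.add hψc))
          (((hint hφc).add (hint hψc)).const_mul _) fun θ _ ↦
            add_rpow_le_two_rpow_mul (norm_nonneg _) (norm_nonneg _) hp
    _ = 2 ^ p * ((∫ θ in 0..2 * π, ‖φ (circleMap 0 r θ)‖ ^ p) +
          ∫ θ in 0..2 * π, ‖ψ (circleMap 0 r θ)‖ ^ p) := by
        rw [intervalIntegral.integral_const_mul,
          intervalIntegral.integral_add (hint hφc) (hint hψc)]
    _ ≤ 2 ^ p * (C₁ + C₂) := by
        gcongr
        exacts [hC₁ r hr0 hr1, hC₂ r hr0 hr1]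

theorem exists_lintegral_le {p : ℝ} {f : ℂ → E} (hf : MemHardy p f) (hp : 0 ≤ p) :
    ∃ C : ℝ≥0∞, C ≠ ∞ ∧ ∀ r ∈ Set.Ioo (0 : ℝ) 1,
      ∫⁻ θ in Set.Ioc 0 (2 * π), ‖f (circleMap 0 r θ)‖ₑ ^ p ≤ C := by
  obtain ⟨hd, C, hC⟩ := hf
  refine ⟨ENNReal.ofReal C, ENNReal.ofReal_ne_top, fun r hr ↦ ?_⟩
  have hr' : |r| < 1 := (abs_of_pos hr.1).trans_lt hr.2
  rw [lintegral_enorm_rpow_eq_ofReal_integral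
    (continuous_comp_circleMap_of_abs_lt_one hd.continuousOn hr').continuousOn two_pi_pos.le hp]
  exact ENNReal.ofReal_le_ofReal (hC r hr.1.le hr.2)

variable {p : ℝ} {f : ℂ → E} {F : ℝ → E}

theorem lintegral_radialLimit_ne_top (hf : MemHardy p f) (hp : 0 ≤ p)
    (hF : HasRadialLimits f F) :
    ∫⁻ θ in Set.Ioc 0 (2 * π), ‖F θ‖ₑ ^ p ≠ ∞ := by
  obtain ⟨r, -, hr, hlim⟩ := exists_seq_strictMono_tendsto' (zero_lt_one' ℝ)
  obtain ⟨C, hC, hfC⟩ := hf.exists_lintegral_le hp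
  refine ne_top_of_le_ne_top hC ?_
  calc ∫⁻ θ in Set.Ioc 0 (2 * π), ‖F θ‖ₑ ^ p
      ≤ liminf (fun n ↦ ∫⁻ θ in Set.Ioc 0 (2 * π), ‖f (circleMap 0 (r n) θ)‖ₑ ^ p) atTop :=
        lintegral_le_liminf_of_tendsto
          (fun n ↦ (aemeasurable_enorm_comp_circleMap hf.1.continuousOn (hr n) _).pow_const p)
          ((hF.ae_tendsto_enorm hr hlim).mono fun _ hθ ↦ hθ.ennrpow_const p)
    _ ≤ C := liminf_le_of_frequently_le' (.of_forall fun n ↦ hfC _ (hr n))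

theorem lintegral_rpow_diameter_le_of_lt (hf : MemHardy p f) {s : ℝ} (hs : s ∈ Set.Ioo 0 p)
    (hF : HasRadialLimits f F) (t : ℝ) :
    ∫⁻ x in Set.Ioo (-1) 1, ‖f (circleMap 0 x t)‖ₑ ^ s ≤
      2⁻¹ * ∫⁻ θ in Set.Ioc 0 (2 * π), ‖F θ‖ₑ ^ s := by
  obtain ⟨r, -, hr, hlim⟩ := exists_seq_strictMono_tendsto' (zero_lt_one' ℝ)
  obtain ⟨C, hC, hfC⟩ := hf.exists_lintegral_le (hs.1.trans hs.2).le
  have hf_diameter := (continuousOn_comp_circleMap_diameter hf.1.continuousOn t).enorm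
  have hr_abs (n : ℕ) : |r n| < 1 := (abs_of_pos (hr n).1).trans_lt (hr n).2
  have hmeas (n : ℕ) : AEMeasurable (fun x ↦ ‖f (circleMap 0 (r n * x) t)‖ₑ ^ s)
      (volume.restrict (Set.Ioo (-1) 1)) :=
    (((continuousOn_comp_circleMap_mul_diameter hf.1.continuousOn (hr_abs n) t).mono
      Set.Ioo_subset_Icc_self).enorm.aemeasurable measurableSet_Ioo).pow_const s
  have hdilation : ∀ᵐ x ∂volume.restrict (Set.Ioo (-1 : ℝ) 1),
      Tendsto (fun n ↦ ‖f (circleMap 0 (r n * x) t)‖ₑ ^ s) atTop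
        (𝓝 (‖f (circleMap 0 x t)‖ₑ ^ s)) := by
    filter_upwards [ae_restrict_mem measurableSet_Ioo] with x hx
    have hrx : Tendsto (fun n ↦ r n * x) atTop (𝓝 x) := by simpa using hlim.mul_const x
    exact (((hf_diameter.continuousAt (isOpen_Ioo.mem_nhds hx)).tendsto).comp hrx).ennrpow_const s
  have hcircle := tendsto_lintegral_rpow_of_lintegral_rpow_le hs.1.le hs.2
    (fun n ↦ aemeasurable_enorm_comp_circleMap hf.1.continuousOn (hr n) _) hC
    (fun n ↦ hfC _ (hr n)) (hF.ae_tendsto_enorm hr hlim)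
  calc ∫⁻ x in Set.Ioo (-1) 1, ‖f (circleMap 0 x t)‖ₑ ^ s
      ≤ liminf (fun n ↦ ∫⁻ x in Set.Ioo (-1) 1, ‖f (circleMap 0 (r n * x) t)‖ₑ ^ s) atTop :=
        lintegral_le_liminf_of_tendsto hmeas hdilation
    _ ≤ liminf (fun n ↦ 2⁻¹ * ∫⁻ θ in Set.Ioc 0 (2 * π), ‖f (circleMap 0 (r n) θ)‖ₑ ^ s)
          atTop := liminf_le_liminf (Eventually.of_forall fun n ↦
        lintegral_enorm_rpow_diameter_le_circle hf.1 hs.1 (hr_abs n) t)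
    _ = 2⁻¹ * ∫⁻ θ in Set.Ioc 0 (2 * π), ‖F θ‖ₑ ^ s :=
        (ENNReal.Tendsto.const_mul hcircle (Or.inr (by simp))).liminf_eq

theorem lintegral_rpow_diameter_le (hf : MemHardy p f) (hp : 0 < p)
    (hF : HasRadialLimits f F) (t : ℝ) :
    ∫⁻ x in Set.Ioo (-1) 1, ‖f (circleMap 0 x t)‖ₑ ^ p ≤
      2⁻¹ * ∫⁻ θ in Set.Ioc 0 (2 * π), ‖F θ‖ₑ ^ p :=
  lintegral_rpow_le_of_forall_lt
    ((continuousOn_comp_circleMap_diameter hf.1.continuousOn t).enorm.aemeasurable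
      measurableSet_Ioo)
    (hF.aemeasurable_enorm hf.1.continuousOn) hp
    (hf.lintegral_radialLimit_ne_top hp.le hF) (by simp)
    fun _ hs ↦ hf.lintegral_rpow_diameter_le_of_lt hs hF t

theorem integral_norm_rpow_diameter_le (hf : MemHardy p f) (hp : 0 < p)
    (hF : HasRadialLimits f F) (t : ℝ) :
    ∫ x in (-1 : ℝ)..1, ‖f (circleMap 0 x t)‖ ^ p ≤
      (1 / 2) * ∫ θ in 0..2 * π, ‖F θ‖ ^ p := by
  rw [intervalIntegral.integral_of_le (by norm_num), intervalIntegral.integral_of_le two_pi_pos.le,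
    integral_Ioc_eq_integral_Ioo,
    integral_norm_rpow_eq_toReal_lintegral
      ((continuousOn_comp_circleMap_diameter hf.1.continuousOn t).enorm.aemeasurable
        measurableSet_Ioo) hp.le,
    integral_norm_rpow_eq_toReal_lintegral
      (hF.aemeasurable_enorm hf.1.continuousOn) hp.le]
  have hle := ENNReal.toReal_mono
    (ENNReal.mul_ne_top (by simp) (hf.lintegral_radialLimit_ne_top hp.le hF))
    (hf.lintegral_rpow_diameter_le hp hF t)
  simpa [ENNReal.toReal_mul] using hle

end MemHardy

end Hardy

theorem riesz_fejer_sum_of_moduli_general {E₁ E₂ : Type*} [NormedAddCommGroup E₁]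
    [NormedSpace ℂ E₁] [NormedAddCommGroup E₂] [NormedSpace ℂ E₂] {p : ℝ} (hp : 0 < p)
    {φ : ℂ → E₁} {ψ : ℂ → E₂} {Fφ : ℝ → E₁} {Fψ : ℝ → E₂} (hφ : MemHardy p φ)
    (hψ : MemHardy p ψ) (hFφ : HasRadialLimits φ Fφ) (hFψ : HasRadialLimits ψ Fψ) (t : ℝ) :
    ∫ x in (-1 : ℝ)..1, (‖φ (circleMap 0 x t)‖ + ‖ψ (circleMap 0 x t)‖) ^ p ≤
      (1 / 2) * ∫ θ in 0..2 * π, (‖Fφ θ‖ + ‖Fψ θ‖) ^ p := by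
  simpa only [WithLp.prod_norm_eq_of_L1, WithLp.toLp_fst, WithLp.toLp_snd] using
    (hφ.toLp_prod hψ hp.le).integral_norm_rpow_diameter_le hp (hFφ.toLp_prod hFψ 1) t

/-- Lemma: if `φ, ψ` are analytic on the unit disk and in `H^p` for some `p > 1`, with a.e.
radial boundary values `Fφ, Fψ`, then for every real `t`,
`∫_{-1}^{1} (|φ(x e^{it})| + |ψ(x e^{it})|)^p dx
  ≤ (1/2) ∫₀^{2π} (|Fφ(θ)| + |Fψ(θ)|)^p dθ`. -/
theorem riesz_fejer_sum_of_moduli (p : ℝ) (hp : 1 < p) (φ ψ : ℂ → ℂ) (Fφ Fψ : ℝ → ℂ)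
    (hφ : AnalyticOn ℂ φ (Metric.ball 0 1)) (hψ : AnalyticOn ℂ ψ (Metric.ball 0 1))
    (hφHp : ∃ C : ℝ, ∀ r : ℝ, 0 ≤ r → r < 1 →
      (∫ θ in (0:ℝ)..(2 * π), ‖φ ((r : ℂ) * Complex.exp (θ * Complex.I))‖ ^ p) ≤ C)
    (hψHp : ∃ C : ℝ, ∀ r : ℝ, 0 ≤ r → r < 1 →
      (∫ θ in (0:ℝ)..(2 * π), ‖ψ ((r : ℂ) * Complex.exp (θ * Complex.I))‖ ^ p) ≤ C)
    (hFφ : ∀ᵐ θ : ℝ, Tendsto (fun r : ℝ => φ ((r : ℂ) * Complex.exp (θ * Complex.I)))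
      (nhdsWithin 1 (Set.Iio 1)) (nhds (Fφ θ)))
    (hFψ : ∀ᵐ θ : ℝ, Tendsto (fun r : ℝ => ψ ((r : ℂ) * Complex.exp (θ * Complex.I)))
      (nhdsWithin 1 (Set.Iio 1)) (nhds (Fψ θ))) (t : ℝ) :
    (∫ x in (-1:ℝ)..1,
        (‖φ ((x : ℂ) * Complex.exp (t * Complex.I))‖ +
          ‖ψ ((x : ℂ) * Complex.exp (t * Complex.I))‖) ^ p) ≤
      (1 / 2) * ∫ θ in (0:ℝ)..(2 * π), (‖Fφ θ‖ + ‖Fψ θ‖) ^ p := by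
  simp only [← circleMap_zero] at hφHp hψHp hFφ hFψ ⊢
  exact riesz_fejer_sum_of_moduli_general (zero_lt_one.trans hp) ⟨hφ.differentiableOn, hφHp⟩
    ⟨hψ.differentiableOn, hψHp⟩ hFφ hFψ t
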